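/- Let p be a prime number, let A be an integral domain of characteristic p that is finitely generated as an algebra over 𝔽_p and has Krull dimension 1, let B be a finitely generated 𝔽_p-algebra, and let φ, ψ : B → A be ring homomorphisms. Then there exists a constant c (a natural number) such that for every natural number m and every finite field F of characteristic p the following holds: if frob_A^m ∘ φ ≠ ψ, then the number of ring homomorphisms x : A → F satisfying x ∘ frob_A^m ∘ φ = x ∘ ψ is at most c · p^m. Here frob_A : A → A is the Frobenius ring homomorphism a ↦ a^p. -/

import Mathlib

open Polynomial in
lemma aux_dim_le {R S : Type*} [CommRing R] [CommRing S] [IsDomain S] [Algebra R S] [Algebra.IsIntegral R S]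
    (h : Function.Injective (algebraMap R S)) : ringKrullDim R ≤ ringKrullDim S := by
  unfold ringKrullDim
  refine iSup_le fun l => ?_
  obtain ⟨Q, hQ, hQ'⟩ := Ideal.exists_ideal_over_prime_of_isIntegral_of_isDomain
    (S := S) (RelSeries.head l).asIdeal
    (by rw [(RingHom.injective_iff_ker_eq_bot _).1 h]; exact bot_le)
  have : Q.LiesOver (RelSeries.head l).asIdeal := ⟨hQ'.symm⟩
  obtain ⟨L, hL, -, -⟩ := Ideal.exists_ltSeries_of_hasGoingUp l Q
  rw [← hL]
  exact Order.LTSeries.length_le_krullDim L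

open Polynomial in
lemma aux_noether (k A : Type*) [Field k] [CommRing A] [IsDomain A] [Algebra k A]
    [Algebra.FiniteType k A] (hdim : ringKrullDim A = 1) :
    ∃ g : k[X] →+* A, Function.Injective g ∧ g.Finite := by
  obtain ⟨s, g, hg, hf⟩ := exists_finite_inj_algHom_of_fg k A
  have hs : s = 1 := by
    algebraize [g.toRingHom]
    have : Module.Finite (MvPolynomial (Fin s) k) A := hf
    have h1 := aux_dim_le (R := MvPolynomial (Fin s) k) (S := A) hg
    rw [hdim, MvPolynomial.ringKrullDim_of_isNoetherianRing, ringKrullDim_eq_zero_of_field] at h1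
    have h2 : s ≤ 1 := by
      simp at h1
      exact_mod_cast h1
    have h3 : s ≠ 0 := by
      rintro rfl
      have hF : IsField (MvPolynomial (Fin 0) k) :=
        (MvPolynomial.isEmptyRingEquiv k (Fin 0)).toMulEquiv.isField (Field.toIsField k)
      have hA := isField_of_isIntegral_of_isField' (S := A) hF
      rw [ringKrullDim_eq_zero_of_isField hA] at hdim
      exact zero_ne_one hdim
    omega
  subst hs
  let e := (MvPolynomial.uniqueAlgEquiv k (Fin 1)).symm.toRingEquiv
  refine ⟨g.toRingHom.comp e.toRingHom, hg.comp e.injective, ?_⟩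
  exact RingHom.Finite.comp hf (RingHom.Finite.of_surjective _ e.surjective)

open Polynomial in
lemma aux_pow_deg {k ι : Type*} [CommRing k] [Fintype ι] [DecidableEq ι] (U : Matrix ι ι k[X])
    (d : ℕ) (h : ∀ i j, (U i j).natDegree ≤ d) (q : ℕ) :
    ∀ i j, ((U ^ q) i j).natDegree ≤ q * d := by
  induction q with
  | zero =>
    intro i j
    rw [pow_zero, Matrix.one_apply]
    split_ifs <;> simp
  | succ q ih =>
    intro i j
    rw [pow_succ, Matrix.mul_apply]
    refine natDegree_sum_le_of_forall_le _ _ fun l _ => ?_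
    refine natDegree_mul_le.trans ?_
    have := ih i l
    have := h l j
    linarith

open Polynomial in
lemma aux_det_deg {k ι : Type*} [CommRing k] [Fintype ι] [DecidableEq ι] (U : Matrix ι ι k[X])
    (d : ℕ) (h : ∀ i j, (U i j).natDegree ≤ d) : U.det.natDegree ≤ Fintype.card ι * d := by
  rw [Matrix.det_apply]
  refine natDegree_sum_le_of_forall_le _ _ fun σ _ => ?_
  refine (natDegree_smul_le _ _).trans ?_
  refine (natDegree_prod_le _ _).trans ?_
  refine (Finset.sum_le_sum fun i _ => h _ _).trans ?_
  simp

/-- The fibres of evaluation at `t` have at most `r` elements. -/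
lemma aux_fiber {R A F ι : Type*} [CommRing R] [CommRing A] [Algebra R A] [Field F] [Fintype ι]
    (b : Module.Basis ι R A) (f : R →+* F) (T : Finset (A →+* F))
    (hT : ∀ x ∈ T, x.comp (algebraMap R A) = f) : T.card ≤ Fintype.card ι := by
  have key : ∀ x ∈ T, ∀ a, x a = ∑ i, f (b.repr a i) * x (b i) := by
    intro x hx a
    conv_lhs => rw [← b.sum_repr a]
    rw [map_sum]
    refine Finset.sum_congr rfl fun i _ => ?_
    rw [Algebra.smul_def, map_mul, ← hT x hx]; rfl
  have hli : LinearIndependent F (fun (x : T) (i : ι) => x.1 (b i)) := by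
    have h0 := (linearIndependent_monoidHom A F).comp (fun x : T => (x.1 : A →* F)) (by
      intro x y h
      apply Subtype.ext
      ext a
      exact DFunLike.congr_fun h a)
    rw [Fintype.linearIndependent_iff] at h0 ⊢
    intro g hg
    apply h0 g
    ext a
    have hg' : ∀ i, ∑ x : T, g x * x.1 (b i) = 0 := fun i => by
      simpa using congrFun hg i
    simp only [Finset.sum_apply, Pi.smul_apply, Function.comp, smul_eq_mul, Pi.zero_apply]
    calc ∑ x : T, g x * x.1 a = ∑ x : T, ∑ i, f (b.repr a i) * (g x * x.1 (b i)) := by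
          refine Finset.sum_congr rfl fun x _ => ?_
          rw [key x.1 x.2 a, Finset.mul_sum]
          refine Finset.sum_congr rfl fun i _ => ?_
          ring
      _ = ∑ i, f (b.repr a i) * ∑ x : T, (g x * x.1 (b i)) := by
          rw [Finset.sum_comm]; simp only [Finset.mul_sum]
      _ = 0 := Finset.sum_eq_zero fun i _ => by rw [hg' i, mul_zero]
  have := hli.fintype_card_le_finrank
  simpa using this

lemma aux_det_zero {R A F ι : Type*} [CommRing R] [CommRing A] [Algebra R A] [Field F] [Fintype ι]
    [DecidableEq ι] (b : Module.Basis ι R A) (x : A →+* F) (a : A) (ha : x a = 0) :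
    x (algebraMap R A (Algebra.leftMulMatrix b a).det) = 0 := by
  change (x.comp (algebraMap R A)) _ = 0
  rw [RingHom.map_det]
  rw [← Matrix.exists_vecMul_eq_zero_iff]
  refine ⟨fun i => x (b i), ?_, ?_⟩
  · intro h
    have : x 1 = 0 := by
      rw [← b.sum_repr 1, map_sum]
      refine Finset.sum_eq_zero fun i _ => ?_
      rw [Algebra.smul_def, map_mul, congrFun h i]; simp
    simp at this
  · ext j
    have h1 : x (a * b j) = 0 := by rw [map_mul, ha, zero_mul]
    rw [← b.sum_repr (a * b j), map_sum] at h1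
    rw [Pi.zero_apply, ← h1]
    refine Finset.sum_congr rfl fun i _ => ?_
    rw [Algebra.smul_def, map_mul]
    simp [Algebra.leftMulMatrix_eq_repr_mul, mul_comm]

open Polynomial in
lemma aux_count {k A F ι : Type*} [Field k] [CommRing A] [IsDomain A] [Algebra k[X] A] [Field F]
    [Finite F] [Fintype ι] [DecidableEq ι] (b : Module.Basis ι k[X] A)
    (σ : k →+* F) (hσ : ∀ τ : k →+* F, τ = σ) (a : A) (ha : a ≠ 0) (S : Set (A →+* F))
    (hS : ∀ x ∈ S, x a = 0) : S.Finite ∧ Nat.card S ≤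
      Fintype.card ι * (Algebra.leftMulMatrix b a).det.natDegree := by
  classical
  have hcomp : ∀ x : A →+* F, x.comp (algebraMap k[X] A) =
      eval₂RingHom σ (x (algebraMap k[X] A X)) := by
    intro x
    refine Polynomial.ringHom_ext' ?_ (by simp)
    rw [hσ ((x.comp (algebraMap k[X] A)).comp C)]
    ext; simp
  have hfin : Finite (A →+* F) := by
    refine Finite.of_injective
      (fun x : A →+* F => (x (algebraMap k[X] A X), fun i => x (b i))) ?_
    intro x y h
    simp only [Prod.mk.injEq] at h
    have h1 : x.comp (algebraMap k[X] A) = y.comp (algebraMap k[X] A) := by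
      rw [hcomp, hcomp, h.1]
    ext a
    rw [← b.sum_repr a, map_sum, map_sum]
    refine Finset.sum_congr rfl fun i _ => ?_
    rw [Algebra.smul_def, map_mul, map_mul]
    exact congrArg₂ _ (RingHom.congr_fun h1 _) (congrFun h.2 i)
  refine ⟨Set.toFinite S, ?_⟩
  set D := (Algebra.leftMulMatrix b a).det with hD
  have hD0 : D ≠ 0 := by
    rw [hD, ← Algebra.norm_eq_matrix_det]
    exact (Algebra.norm_ne_zero_iff_of_basis b).2 ha
  have hD0' : D.map σ ≠ 0 := by
    rwa [Ne, Polynomial.map_eq_zero_iff σ.injective]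
  have := Fintype.ofFinite (A →+* F)
  rw [Nat.card_eq_card_toFinset]
  have h1 := Finset.card_le_mul_card_image_of_maps_to
    (f := fun x : A →+* F => x (algebraMap k[X] A X)) (s := S.toFinset)
    (t := (D.map σ).roots.toFinset) (by
      intro x hx
      rw [Multiset.mem_toFinset, mem_roots hD0', IsRoot, eval_map]
      have h2 := aux_det_zero b x a (hS x (Set.mem_toFinset.1 hx))
      have h3 := RingHom.congr_fun (hcomp x) D
      simp only [coe_eval₂RingHom] at h3
      rw [← h3]
      exact h2) (Fintype.card ι) (by
      intro τ _
      refine aux_fiber b (eval₂RingHom σ τ) _ fun x hx => ?_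
      rw [hcomp, (Finset.mem_filter.1 hx).2])
  refine h1.trans (Nat.mul_le_mul_left _ ?_)
  refine (Multiset.toFinset_card_le _).trans ((card_roots' _).trans ?_)
  exact natDegree_map_le


/-- Let `A` be an integral domain of characteristic `p`, finitely generated
over `𝔽_p` and of Krull dimension `1`, `B` a finitely generated `𝔽_p`-algebra, and
`φ ψ : B →+* A`. Then there is a constant `c` such that for every `m : ℕ` and every finite
field `F` of characteristic `p`: if `frob_A^m ∘ φ ≠ ψ`, the number of ring homomorphisms
`x : A →+* F` with `x ∘ frob_A^m ∘ φ = x ∘ ψ` is at most `c * p ^ m`. -/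
theorem card_coincidence_points_le
    (p : ℕ) [Fact p.Prime]
    (A B : Type*) [CommRing A] [IsDomain A] [CharP A p]
    [Algebra (ZMod p) A] [Algebra.FiniteType (ZMod p) A]
    (hdim : ringKrullDim A = 1)
    [CommRing B] [Algebra (ZMod p) B] [Algebra.FiniteType (ZMod p) B]
    (φ ψ : B →+* A) :
    ∃ c : ℕ, ∀ (m : ℕ) (F : Type) (_ : Field F) (_ : Finite F) (_ : CharP F p),
      (iterateFrobenius A p m).comp φ ≠ ψ →
        {x : A →+* F | x.comp ((iterateFrobenius A p m).comp φ) = x.comp ψ}.Finite ∧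
          Nat.card {x : A →+* F | x.comp ((iterateFrobenius A p m).comp φ) = x.comp ψ} ≤
            c * p ^ m := by
  obtain ⟨g, hg, hf⟩ := aux_noether (ZMod p) A hdim
  let : Algebra (Polynomial (ZMod p)) A := g.toAlgebra
  have : Module.Finite (Polynomial (ZMod p)) A := hf
  have : FaithfulSMul (Polynomial (ZMod p)) A := (faithfulSMul_iff_algebraMap_injective _ _).2 hg
  have : Module.IsTorsionFree (Polynomial (ZMod p)) A := inferInstance
  have : Module.Free (Polynomial (ZMod p)) A := inferInstance
  classical
  let ι := Module.Free.ChooseBasisIndex (Polynomial (ZMod p)) A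
  let b : Module.Basis ι (Polynomial (ZMod p)) A := Module.Free.chooseBasis _ _
  obtain ⟨s, hs⟩ := (inferInstance : Algebra.FiniteType (ZMod p) B).out
  let L := Algebra.leftMulMatrix b
  let d : ℕ := ∑ y ∈ s, ∑ i, ∑ j, ((L (φ y) i j).natDegree + (L (ψ y) i j).natDegree)
  have hd : ∀ y ∈ s, ∀ i j, (L (φ y) i j).natDegree + (L (ψ y) i j).natDegree ≤ d := by
    intro y hy i j
    refine le_trans ?_ (Finset.single_le_sum (f := fun y => ∑ i, ∑ j,
      ((L (φ y) i j).natDegree + (L (ψ y) i j).natDegree)) (fun _ _ => Nat.zero_le _) hy)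
    refine le_trans ?_ (Finset.single_le_sum (f := fun i => ∑ j,
      ((L (φ y) i j).natDegree + (L (ψ y) i j).natDegree)) (fun _ _ => Nat.zero_le _)
      (Finset.mem_univ i))
    exact Finset.single_le_sum (f := fun j =>
      ((L (φ y) i j).natDegree + (L (ψ y) i j).natDegree)) (fun _ _ => Nat.zero_le _)
      (Finset.mem_univ j)
  refine ⟨Fintype.card ι * (Fintype.card ι * d), ?_⟩
  intro m F _ _ _ hne
  obtain ⟨y, hy, hya⟩ : ∃ y ∈ s, φ y ^ p ^ m - ψ y ≠ 0 := by
    by_contra! hcon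
    apply hne
    have hsub : (ZMod.castHom (dvd_refl p) A) = algebraMap (ZMod p) A := Subsingleton.elim _ _
    let f₁ : B →ₐ[ZMod p] A := { (iterateFrobenius A p m).comp φ with
      commutes' := fun r => RingHom.congr_fun (Subsingleton.elim
        (((iterateFrobenius A p m).comp φ).comp (algebraMap (ZMod p) B)) (algebraMap (ZMod p) A)) r }
    let f₂ : B →ₐ[ZMod p] A := { ψ with
      commutes' := fun r => RingHom.congr_fun (Subsingleton.elim
        (ψ.comp (algebraMap (ZMod p) B)) (algebraMap (ZMod p) A)) r }
    have h12 : f₁ = f₂ := by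
      refine AlgHom.ext_of_adjoin_eq_top hs fun y hy => ?_
      have := sub_eq_zero.1 (hcon y hy)
      simpa [f₁, f₂, iterateFrobenius_def] using this
    ext z
    exact DFunLike.congr_fun h12 z
  have h := aux_count b (ZMod.castHom (dvd_refl p) F) (fun τ => Subsingleton.elim _ _)
    (φ y ^ p ^ m - ψ y) hya
    {x : A →+* F | x.comp ((iterateFrobenius A p m).comp φ) = x.comp ψ} (by
      intro x hx
      have := RingHom.congr_fun hx y
      simp only [RingHom.comp_apply, iterateFrobenius_def] at this
      rw [map_sub, this, sub_self])
  refine ⟨h.1, h.2.trans ?_⟩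
  have hdeg : (L (φ y ^ p ^ m - ψ y)).det.natDegree ≤ Fintype.card ι * (p ^ m * d) := by
    refine aux_det_deg _ _ fun i j => ?_
    rw [map_sub, map_pow, Matrix.sub_apply]
    refine (Polynomial.natDegree_sub_le _ _).trans (max_le ?_ ?_)
    · exact aux_pow_deg _ _ (fun i j => le_trans (Nat.le_add_right _ _) (hd y hy i j)) _ i j
    · refine le_trans (le_trans (Nat.le_add_left _ _) (hd y hy i j)) ?_
      exact Nat.le_mul_of_pos_left _ (pow_pos (Fact.out : p.Prime).pos m)
  calc _ ≤ Fintype.card ι * (Fintype.card ι * (p ^ m * d)) := Nat.mul_le_mul_left _ hdeg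
    _ = _ := by ring
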